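/- arXiv:1703.01830 — 4 statements merged into one kernel-verified Lean document; each statement's English description precedes it below -/
import Mathlib

section
/- For every y ∈ 𝒫 with Ay ≠ s* one has d(y, E) ≤ (n√r / 2) · d(y, 𝒜'); in the notation of the paper, κ(y) ≤ n√r / 2 for every y ∈ 𝒫 \ E. -/
open Finset

/-- A set function `g` on subsets of `V` is submodular. -/
def Submodular {V : Type*} [DecidableEq V] (g : Finset V → ℝ) : Prop :=
  ∀ X Y : Finset V, g X + g Y ≥ g (X ∪ Y) + g (X ∩ Y)

/-- `x` belongs to the base polytope `B(g)` of the set function `g`. -/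
def InBasePolytope {V : Type*} [Fintype V] (g : Finset V → ℝ) (x : V → ℝ) : Prop :=
  (∀ S : Finset V, ∑ v ∈ S, x v ≤ g S) ∧ (∑ v, x v = g Finset.univ)

/-- Euclidean norm of a finitely indexed real vector. -/
noncomputable def norm2 {ι : Type*} [Fintype ι] (x : ι → ℝ) : ℝ :=
  Real.sqrt (∑ i, x i ^ 2)

/-- Euclidean distance from a point to a set of vectors. -/
noncomputable def distSet {ι : Type*} [Fintype ι] (y : ι → ℝ) (K : Set (ι → ℝ)) : ℝ :=
  sInf ((fun z => norm2 (y - z)) '' K)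

/-!
Fix `x ∈ 𝒫` with residual `g = Ax - s ≠ 0`. No sublevel set `L` of `g` other than `V` is tight for
all `fᵢ`, since `g(L) < 0` while `f(L) - s(L) ≥ 0`; hence every value of `g` below its maximum is
crossed by an exchange arc `(u, v)` of some block, `g v ≤ g w < g u`. An inclusion-minimal family of
arcs crossing all these values has pairwise distinct heads and pairwise distinct tails, so its
exchange directions have nonpositive inner products. Combining them with weights `c = g u - g v`
gives a feasible direction `z` with `⟪g, Az⟫ = -∑ c²` and `‖z‖² ≤ 2 ∑ c²`, and a discrete Wirtinger
inequality for the sorted values of `g` gives `‖g‖² ≤ (n² / 8) ∑ c²`. Thus `‖Ax - s‖` can be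
decreased at rate at least `2 / n` per unit length wherever `Ax ≠ s`, and compactness of `𝒫`
turns this into the error bound `d(y, E) ≤ (n / 2) ‖Ay - s‖`. Finally
`‖Ay - s‖ ≤ √r d(y, 𝒜')` by Cauchy–Schwarz.
-/

open scoped Topology InnerProductSpace

/-! ### Sums of squared gaps -/

lemma sum_range_succ_natCast_sub (n k : ℕ) :
    ∑ j ∈ range (k + 1), ((n : ℝ) - j) = (k + 1) * (2 * n - k) / 2 := by
  induction k with
  | zero => simp
  | succ k ih =>
    rw [sum_range_succ, ih]
    push_cast
    ring

lemma sq_sub_le_mul_sum_sq_gaps (G : ℕ → ℝ) {j n : ℕ} (hjn : j ≤ n) :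
    (G n - G j) ^ 2 ≤ ((n : ℝ) - j) * ∑ k ∈ Ico j n, (G (k + 1) - G k) ^ 2 := by
  rw [← sum_Ico_sub G hjn, ← Nat.cast_sub hjn, ← Nat.card_Ico]
  exact sq_sum_le_card_mul_sum_sq

lemma sum_sq_sub_le_sum_mul_sq_gaps (G : ℕ → ℝ) (n : ℕ) :
    ∑ j ∈ range n, (G n - G j) ^ 2 ≤
      ∑ k ∈ range n, (k + 1) * (2 * n - k) / 2 * (G (k + 1) - G k) ^ 2 :=
  calc ∑ j ∈ range n, (G n - G j) ^ 2
      ≤ ∑ j ∈ range n, ∑ k ∈ Ico j n, ((n : ℝ) - j) * (G (k + 1) - G k) ^ 2 := by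
        refine sum_le_sum fun j hj => ?_
        rw [← mul_sum]
        exact sq_sub_le_mul_sum_sq_gaps G (mem_range.1 hj).le
    _ = ∑ k ∈ range n, ∑ j ∈ range (k + 1), ((n : ℝ) - j) * (G (k + 1) - G k) ^ 2 :=
        sum_comm' fun j k => by simp only [mem_range, mem_Ico]; omega
    _ = _ := by simp only [← sum_mul, sum_range_succ_natCast_sub]

-- The left-hand side is `∑ i < j, (G j - G i) ^ 2`.
lemma mul_sum_sq_sub_sq_sum_le (G : ℕ → ℝ) (n : ℕ) :
    n * ∑ i ∈ range n, G i ^ 2 - (∑ i ∈ range n, G i) ^ 2 ≤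
      n / 2 * ∑ k ∈ range n, (k + 1) * (n - (k + 1)) * (G (k + 1) - G k) ^ 2 := by
  induction n with
  | zero => simp
  | succ n ih =>
    have expand_row : ∑ j ∈ range n, (G n - G j) ^ 2
        = n * G n ^ 2 - 2 * G n * ∑ j ∈ range n, G j + ∑ j ∈ range n, G j ^ 2 := by
      simp [sub_sq, sum_add_distrib, sum_sub_distrib, mul_sum]
    calc ((n + 1 : ℕ) : ℝ) * ∑ i ∈ range (n + 1), G i ^ 2 - (∑ i ∈ range (n + 1), G i) ^ 2
        = (n : ℝ) * ∑ i ∈ range n, G i ^ 2 - (∑ i ∈ range n, G i) ^ 2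
            + ∑ j ∈ range n, (G n - G j) ^ 2 := by
          rw [expand_row, sum_range_succ, sum_range_succ]
          push_cast
          ring
      _ ≤ (n : ℝ) / 2 * ∑ k ∈ range n, (k + 1) * (n - (k + 1)) * (G (k + 1) - G k) ^ 2
            + ∑ k ∈ range n, (k + 1) * (2 * n - k) / 2 * (G (k + 1) - G k) ^ 2 :=
          add_le_add ih (sum_sq_sub_le_sum_mul_sq_gaps G n)
      _ = _ := by
          rw [sum_range_succ, mul_add, mul_sum, mul_sum, ← sum_add_distrib]
          push_cast
          rw [sub_self, mul_zero, zero_mul, mul_zero, add_zero]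
          exact sum_congr rfl fun k _ => by ring

-- A discrete Wirtinger inequality; the sharp constant is `1 / (4 sin² (π / (2 n)))`.
lemma sum_sq_le_sum_sq_gaps_of_sum_eq_zero {G : ℕ → ℝ} {n : ℕ}
    (hG : ∑ i ∈ range n, G i = 0) :
    ∑ i ∈ range n, G i ^ 2 ≤ n ^ 2 / 8 * ∑ k ∈ range (n - 1), (G (k + 1) - G k) ^ 2 := by
  rcases n with _ | m
  · simp
  have hvar := mul_sum_sq_sub_sq_sum_le G (m + 1)
  rw [hG, sum_range_succ (fun k : ℕ => ((k : ℝ) + 1) * _ * _)] at hvar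
  have amgm : ∑ k ∈ range m, ((k : ℝ) + 1) * ((m + 1 : ℕ) - (k + 1)) * (G (k + 1) - G k) ^ 2
      ≤ ((m + 1 : ℕ) : ℝ) ^ 2 / 4 * ∑ k ∈ range m, (G (k + 1) - G k) ^ 2 := by
    rw [mul_sum]
    gcongr with k
    linarith [sq_nonneg (((m + 1 : ℕ) : ℝ) - 2 * (k + 1))]
  have hn : (0 : ℝ) < (m + 1 : ℕ) := by positivity
  refine le_of_mul_le_mul_left ?_ hn
  have hscaled := mul_le_mul_of_nonneg_left amgm (half_pos hn).le
  rw [Nat.add_sub_cancel]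
  push_cast at hvar hscaled ⊢
  linarith

lemma sum_sq_gaps_le_sq_of_monotone {G : ℕ → ℝ} (hG : Monotone G) (m : ℕ) :
    ∑ k ∈ range m, (G (k + 1) - G k) ^ 2 ≤ (G m - G 0) ^ 2 := by
  rw [← sum_range_sub]
  exact sum_sq_le_sq_sum_of_nonneg fun k _ => sub_nonneg.2 (hG k.le_succ)

lemma sum_sq_gaps_le_sum_sq_of_cover {α : Type*} {G : ℕ → ℝ} (hG : Monotone G) (m : ℕ)
    {F : Finset α} {p q : α → ℝ} (hpq : ∀ a ∈ F, p a ≤ q a)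
    (hcover : ∀ k < m, G k < G (k + 1) → ∃ a ∈ F, p a ≤ G k ∧ G (k + 1) ≤ q a) :
    ∑ k ∈ range m, (G (k + 1) - G k) ^ 2 ≤ ∑ a ∈ F, (q a - p a) ^ 2 := by
  let clamp : α → ℕ → ℝ := fun a k => max (p a) (min (G k) (q a))
  have clamp_mono (a : α) : Monotone (clamp a) := fun i j hij =>
    max_le_max le_rfl (min_le_min (hG hij) le_rfl)
  have gap_le (k : ℕ) (hk : k < m) :
      (G (k + 1) - G k) ^ 2 ≤ ∑ a ∈ F, (clamp a (k + 1) - clamp a k) ^ 2 := by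
    rcases (hG k.le_succ).eq_or_lt with heq | hlt
    · rw [← Nat.succ_eq_add_one, ← heq, sub_self, zero_pow two_ne_zero]
      positivity
    · obtain ⟨a, haF, hpa, hqa⟩ := hcover k hk hlt
      have clamp_left : clamp a k = G k := by simp [clamp, hpa, hlt.le.trans hqa]
      have clamp_right : clamp a (k + 1) = G (k + 1) := by simp [clamp, hqa, hpa.trans hlt.le]
      rw [← clamp_left, ← clamp_right]
      exact single_le_sum (f := fun b => (clamp b (k + 1) - clamp b k) ^ 2)
        (fun b _ => sq_nonneg _) haF
  calc ∑ k ∈ range m, (G (k + 1) - G k) ^ 2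
      ≤ ∑ k ∈ range m, ∑ a ∈ F, (clamp a (k + 1) - clamp a k) ^ 2 :=
        sum_le_sum fun k hk => gap_le k (mem_range.1 hk)
    _ = ∑ a ∈ F, ∑ k ∈ range m, (clamp a (k + 1) - clamp a k) ^ 2 := sum_comm
    _ ≤ ∑ a ∈ F, (clamp a m - clamp a 0) ^ 2 :=
        sum_le_sum fun a _ => sum_sq_gaps_le_sq_of_monotone (clamp_mono a) m
    _ ≤ ∑ a ∈ F, (q a - p a) ^ 2 := by
        gcongr with a ha
        · exact sub_nonneg.2 (clamp_mono a m.zero_le)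
        · exact max_le (hpq a ha) (min_le_right _ _)
        · exact le_max_left _ _

lemma exists_monotone_enumeration {V : Type*} [Fintype V] [Nonempty V] (g : V → ℝ) :
    ∃ e : ℕ → V, Monotone (g ∘ e) ∧ Function.Surjective e ∧
      ∀ φ : V → ℝ, ∑ i ∈ range (Fintype.card V), φ (e i) = ∑ v, φ v := by
  obtain ⟨m, hm⟩ : ∃ m, Fintype.card V = m + 1 :=
    Nat.exists_eq_add_one.2 Fintype.card_pos
  let e₀ : Fin (m + 1) ≃ V := (Fintype.equivFinOfCardEq hm).symm
  let e : Fin (m + 1) ≃ V := (Tuple.sort (g ∘ e₀)).trans e₀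
  have e_mono : Monotone (g ∘ e) := Tuple.monotone_sort (g ∘ e₀)
  have clamp_val (i : Fin (m + 1)) : Fin.clamp i m = i := by
    ext
    simp [Fin.is_le]
  refine ⟨fun k => e (Fin.clamp k m), fun _ _ hjk => e_mono (Fin.clamp_monotone hjk),
    fun v => ⟨e.symm v, ?_⟩, fun φ => ?_⟩
  · simp only [clamp_val, e.apply_symm_apply]
  · rw [hm, sum_range, ← e.sum_comp]
    simp only [clamp_val]

lemma sum_sq_le_sum_sq_of_cover {V α : Type*} [Fintype V] {g : V → ℝ} (hg : ∑ v, g v = 0)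
    {F : Finset α} {u v : α → V} (hvu : ∀ a ∈ F, g (v a) ≤ g (u a))
    (hcover : ∀ w, (∃ x, g w < g x) → ∃ a ∈ F, g w ∈ Set.Ico (g (v a)) (g (u a))) :
    ∑ w, g w ^ 2 ≤ (Fintype.card V : ℝ) ^ 2 / 8 * ∑ a ∈ F, (g (u a) - g (v a)) ^ 2 := by
  cases isEmpty_or_nonempty V
  · simp
  obtain ⟨e, e_mono, e_surj, sum_e⟩ := exists_monotone_enumeration g
  have gap_cover (k : ℕ) (hk : g (e k) < g (e (k + 1))) :
      ∃ a ∈ F, g (v a) ≤ g (e k) ∧ g (e (k + 1)) ≤ g (u a) := by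
    obtain ⟨a, haF, hva, hua⟩ := hcover (e k) ⟨_, hk⟩
    obtain ⟨j, hj⟩ := e_surj (u a)
    rw [← hj] at hua
    exact ⟨a, haF, hva, hj ▸ e_mono (Nat.succ_le_of_lt (e_mono.reflect_lt hua))⟩
  rw [← sum_e (fun w => g w ^ 2)]
  refine (sum_sq_le_sum_sq_gaps_of_sum_eq_zero ((sum_e g).trans hg)).trans ?_
  gcongr
  exact sum_sq_gaps_le_sum_sq_of_cover e_mono _ hvu fun k _ => gap_cover k

lemma exists_Ico_subcover_injOn {α β : Type*} [LinearOrder β] {p q : α → β} {T : Set β}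
    {A : Finset α} (hA : ∀ t ∈ T, ∃ a ∈ A, t ∈ Set.Ico (p a) (q a)) :
    ∃ F ⊆ A, (∀ t ∈ T, ∃ a ∈ F, t ∈ Set.Ico (p a) (q a)) ∧ (∀ a ∈ F, p a < q a) ∧
      Set.InjOn p F ∧ Set.InjOn q F := by
  classical
  obtain ⟨F, hFA, hF, hmin⟩ := exists_minimal_le_of_wellFoundedLT
    (fun F : Finset α => ∀ t ∈ T, ∃ a ∈ F, t ∈ Set.Ico (p a) (q a)) A hA
  have private_point (a : α) (ha : a ∈ F) :
      ∃ t ∈ Set.Ico (p a) (q a), ∀ b ∈ F, t ∈ Set.Ico (p b) (q b) → b = a := by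
    by_contra! hshared
    refine notMem_erase a F (hmin (fun t ht => ?_) (erase_subset a F) ha)
    obtain ⟨b, hb, htb⟩ := hF t ht
    obtain rfl | hba := eq_or_ne b a
    · obtain ⟨c, hc, htc, hcb⟩ := hshared t htb
      exact ⟨c, mem_erase.2 ⟨hcb, hc⟩, htc⟩
    · exact ⟨b, mem_erase.2 ⟨hba, hb⟩, htb⟩
  have eq_of_subset {a b : α} (ha : a ∈ F) (hb : b ∈ F)
      (hab : Set.Ico (p a) (q a) ⊆ Set.Ico (p b) (q b)) : a = b := by
    obtain ⟨t, hta, ht⟩ := private_point a ha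
    exact (ht b hb (hab hta)).symm
  refine ⟨F, hFA, hF, fun a ha => ?_, fun a ha b hb hp => ?_, fun a ha b hb hq => ?_⟩
  · obtain ⟨t, hta, -⟩ := private_point a ha
    exact hta.1.trans_lt hta.2
  · rcases le_total (q a) (q b) with h | h
    · exact eq_of_subset ha hb (Set.Ico_subset_Ico hp.ge h)
    · exact (eq_of_subset hb ha (Set.Ico_subset_Ico hp.le h)).symm
  · rcases le_total (p b) (p a) with h | h
    · exact eq_of_subset ha hb (Set.Ico_subset_Ico h hq.le)
    · exact (eq_of_subset hb ha (Set.Ico_subset_Ico h hq.ge)).symm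

/-! ### Descent -/

section InnerProductSpace

variable {E : Type*} [NormedAddCommGroup E] [InnerProductSpace ℝ E]

lemma norm_sum_sq_le_of_inner_nonpos {α : Type*} {F : Finset α} {e : α → E}
    (he : (F : Set α).Pairwise fun a b => ⟪e a, e b⟫_ℝ ≤ 0) :
    ‖∑ a ∈ F, e a‖ ^ 2 ≤ ∑ a ∈ F, ‖e a‖ ^ 2 := by
  classical
  induction F using Finset.induction_on with
  | empty => simp
  | insert a F ha ih =>
    have cross : ⟪e a, ∑ b ∈ F, e b⟫_ℝ ≤ 0 := by
      rw [inner_sum]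
      exact sum_nonpos fun b hb => he (mem_insert_self a F) (mem_insert_of_mem hb)
        (ne_of_mem_of_not_mem hb ha).symm
    have htail := ih (he.mono (coe_subset.2 (subset_insert a F)))
    rw [sum_insert ha, sum_insert ha, norm_add_sq_real]
    linarith

lemma eventually_mul_lt_mul_norm_sub_norm_add_smul {g h : E} {C N : ℝ} (hC : 0 ≤ C)
    (hslope : ‖g‖ * N < C * -⟪g, h⟫_ℝ) :
    ∀ᶠ ε in 𝓝[>] (0 : ℝ), ε * N < C * (‖g‖ - ‖g + ε • h‖) := by
  have near_zero : ∀ᶠ ε : ℝ in 𝓝[>] 0, ‖g‖ * N < C * (-⟪g, h⟫_ℝ - ε * ‖h‖ ^ 2 / 2) := by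
    have hcont : Continuous fun ε : ℝ => C * (-⟪g, h⟫_ℝ - ε * ‖h‖ ^ 2 / 2) := by fun_prop
    exact ((hcont.tendsto 0).mono_left nhdsWithin_le_nhds).eventually_const_lt
      (by simpa using hslope)
  filter_upwards [near_zero, self_mem_nhdsWithin] with ε hε ε_pos
  have ε_pos : 0 < ε := ε_pos
  have norm_drop : ε * (-⟪g, h⟫_ℝ - ε * ‖h‖ ^ 2 / 2) ≤ ‖g‖ * (‖g‖ - ‖g + ε • h‖) := by
    have hexpand : ‖g + ε • h‖ ^ 2 = ‖g‖ ^ 2 + 2 * (ε * ⟪g, h⟫_ℝ) + (ε * ‖h‖) ^ 2 := by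
      rw [norm_add_sq_real, inner_smul_right, norm_smul, Real.norm_of_nonneg ε_pos.le]
    linarith [sq_nonneg (‖g + ε • h‖ - ‖g‖)]
  refine lt_of_mul_lt_mul_left ?_ (norm_nonneg g)
  calc ‖g‖ * (ε * N) = ε * (‖g‖ * N) := by ring
    _ < ε * (C * (-⟪g, h⟫_ℝ - ε * ‖h‖ ^ 2 / 2)) := mul_lt_mul_of_pos_left hε ε_pos
    _ = C * (ε * (-⟪g, h⟫_ℝ - ε * ‖h‖ ^ 2 / 2)) := by ring
    _ ≤ C * (‖g‖ * (‖g‖ - ‖g + ε • h‖)) := mul_le_mul_of_nonneg_left norm_drop hC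
    _ = ‖g‖ * (C * (‖g‖ - ‖g + ε • h‖)) := by ring

end InnerProductSpace

lemma exists_eq_zero_dist_le_of_descent {X : Type*} [PseudoMetricSpace X] {K : Set X}
    (hK : IsCompact K) {φ : X → ℝ} (hφ : Continuous φ) {C : ℝ}
    (hdesc : ∀ x ∈ K, φ x ≠ 0 → ∃ x' ∈ K, φ x' < φ x ∧ dist x x' ≤ C * (φ x - φ x'))
    {y : X} (hy : y ∈ K) : ∃ x ∈ K, φ x = 0 ∧ dist y x ≤ C * φ y := by
  have hclosed : IsClosed {x | dist y x ≤ C * (φ y - φ x)} :=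
    isClosed_le (by fun_prop) (by fun_prop)
  obtain ⟨x, ⟨hxK, hyx⟩, hmin⟩ :=
    (hK.inter_right hclosed).exists_isMinOn ⟨y, hy, by simp⟩ hφ.continuousOn
  have hx : φ x = 0 := by
    by_contra hx
    obtain ⟨x', hx'K, hlt, hxx'⟩ := hdesc x hxK hx
    refine hlt.not_ge (hmin ⟨hx'K, ?_⟩)
    calc dist y x' ≤ dist y x + dist x x' := dist_triangle _ _ _
      _ ≤ C * (φ y - φ x) + C * (φ x - φ x') := add_le_add hyx hxx'
      _ = C * (φ y - φ x') := by ring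
  exact ⟨x, hxK, hx, by simpa [hx] using hyx⟩

lemma sum_filter_le_neg {V : Type*} [Fintype V] {g : V → ℝ} (hg : ∑ v, g v = 0) {w x : V}
    (hwx : g w < g x) : ∑ v with g v ≤ g w, g v < 0 := by
  rcases lt_or_ge (g w) 0 with hw | hw
  · exact sum_neg (fun v hv => (mem_filter.1 hv).2.trans_lt hw) ⟨w, by simp⟩
  · have above_pos : 0 < ∑ v with ¬ g v ≤ g w, g v :=
      sum_pos (fun v hv => hw.trans_lt (not_le.1 (mem_filter.1 hv).2)) ⟨x, by simpa using hwx⟩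
    linarith [sum_filter_add_sum_filter_not univ (g · ≤ g w) g]

/-! ### Tight sets and exchange arcs -/

section BasePolytope

variable {V : Type*} {f : Finset V → ℝ} {x : V → ℝ}

/-- The set `S` is tight for `x`: the constraint `x(S) ≤ f(S)` of the base polytope is an
equality. -/
def IsTight (f : Finset V → ℝ) (x : V → ℝ) (S : Finset V) : Prop :=
  ∑ v ∈ S, x v = f S

/-- The pair `(u, v)` is an exchange arc at `x`: every tight set containing `v` contains `u`. At a
point `x` of the base polytope this says that a small amount can be moved from coordinate `u` to
coordinate `v` without leaving the polytope. -/
def ExchangeArc (f : Finset V → ℝ) (x : V → ℝ) (u v : V) : Prop :=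
  ∀ S, IsTight f x S → v ∈ S → u ∈ S

section Lattice

variable [Fintype V] [DecidableEq V] {S T : Finset V}

lemma isTight_union_and_inter (hf : Submodular f) (hx : InBasePolytope f x) (hS : IsTight f x S)
    (hT : IsTight f x T) : IsTight f x (S ∪ T) ∧ IsTight f x (S ∩ T) := by
  have hsub := hf S T
  have hunion := hx.1 (S ∪ T)
  have hinter := hx.1 (S ∩ T)
  have hmodular := sum_union_inter (s₁ := S) (s₂ := T) (f := x)
  unfold IsTight at *
  constructor <;> linarith

lemma isTight_of_forall_not_exchangeArc (hf : Submodular f) (hx : InBasePolytope f x)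
    (hS : S.Nonempty) (harc : ∀ u ∉ S, ∀ v ∈ S, ¬ExchangeArc f x u v) : IsTight f x S := by
  have hsep : ∀ u v, ∃ T, IsTight f x T ∧ (u ∉ S → v ∈ S → v ∈ T ∧ u ∉ T) := by
    intro u v
    by_cases huv : u ∉ S ∧ v ∈ S
    · have hnot := harc u huv.1 v huv.2
      unfold ExchangeArc at hnot
      push Not at hnot
      obtain ⟨T, hT, hvT, huT⟩ := hnot
      exact ⟨T, hT, fun _ _ => ⟨hvT, huT⟩⟩
    · exact ⟨univ, hx.2, fun hu hv => absurd ⟨hu, hv⟩ huv⟩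
  choose T hT hTsep using hsep
  have hrepr : S = S.sup' hS fun v => Sᶜ.inf fun u => T u v := by
    ext w
    simp only [mem_sup', mem_inf, mem_compl]
    refine ⟨fun hw => ⟨w, hw, fun u hu => (hTsep u w hu hw).1⟩, ?_⟩
    rintro ⟨v, hv, hw⟩
    by_contra hwS
    exact (hTsep w v hwS hv).2 (hw w hwS)
  rw [hrepr]
  refine sup'_induction hS _ (fun A hA B hB => (isTight_union_and_inter hf hx hA hB).1)
    fun v _ => inf_induction hx.2 (fun A hA B hB => (isTight_union_and_inter hf hx hA hB).2)
      fun u _ => hT u v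

end Lattice

variable [Fintype V]

lemma isClosed_setOf_inBasePolytope (f : Finset V → ℝ) : IsClosed {x | InBasePolytope f x} := by
  simp only [InBasePolytope, Set.ofPred_and, Set.ofPred_forall]
  exact (isClosed_iInter fun S => isClosed_le (by fun_prop) continuous_const).inter
    (isClosed_eq (by fun_prop) continuous_const)

lemma isCompact_setOf_inBasePolytope (f : Finset V → ℝ) : IsCompact {x | InBasePolytope f x} := by
  classical
  refine isCompact_Icc.of_isClosed_subset (isClosed_setOf_inBasePolytope f) (fun x hx => ?_)
    (s := Set.Icc (fun v => f univ - f (univ.erase v)) fun v => f {v})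
  constructor <;> intro v
  · have hsplit := add_sum_erase univ x (mem_univ v)
    have herase := hx.1 (univ.erase v)
    rw [hx.2] at hsplit
    dsimp only
    linarith
  · simpa using hx.1 {v}

lemma eventually_inBasePolytope_add_smul (hx : InBasePolytope f x) {z : V → ℝ}
    (hz : ∀ S, IsTight f x S → ∑ v ∈ S, z v ≤ 0) (hz₀ : ∑ v, z v = 0) :
    ∀ᶠ ε in 𝓝[>] (0 : ℝ), InBasePolytope f (x + ε • z) := by
  have sum_move (S : Finset V) (ε : ℝ) :
      ∑ v ∈ S, (x + ε • z) v = ∑ v ∈ S, x v + ε * ∑ v ∈ S, z v := by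
    simp [sum_add_distrib, mul_sum]
  have hsets : ∀ᶠ ε in 𝓝[>] (0 : ℝ), ∀ S, ∑ v ∈ S, x v + ε * ∑ v ∈ S, z v ≤ f S := by
    refine Filter.eventually_all.2 fun S => ?_
    rcases (hx.1 S).eq_or_lt with htight | hslack
    · filter_upwards [self_mem_nhdsWithin] with ε hε
      linarith [mul_nonpos_of_nonneg_of_nonpos (le_of_lt hε) (hz S htight)]
    · have hcont : Continuous fun ε : ℝ => ∑ v ∈ S, x v + ε * ∑ v ∈ S, z v := by fun_prop
      exact (((hcont.tendsto 0).mono_left nhdsWithin_le_nhds).eventually_lt_const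
        (by simpa using hslack)).mono fun _ => le_of_lt
  filter_upwards [hsets] with ε hε
  exact ⟨fun S => (sum_move S ε).trans_le (hε S), by rw [sum_move, hz₀, mul_zero, add_zero, hx.2]⟩

end BasePolytope

/-! ### Exchange directions in the product of base polytopes -/

section Product

variable {ι V : Type*}

/-- The product `∏ᵢ B(fᵢ)` of base polytopes, as a subset of Euclidean space. -/
def basePolytopeProd [Fintype V] (f : ι → Finset V → ℝ) : Set (EuclideanSpace ℝ (ι × V)) :=
  {y | ∀ i, InBasePolytope (f i) fun v => y (i, v)}

/-- The tangent cone of `∏ᵢ B(fᵢ)` at `x`, described by the constraints that are tight at `x`. -/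
def tangentCone [Fintype V] (f : ι → Finset V → ℝ) (x : EuclideanSpace ℝ (ι × V)) :
    PointedCone ℝ (EuclideanSpace ℝ (ι × V)) where
  carrier := {z | ∀ i, (∀ S, IsTight (f i) (fun v => x (i, v)) S → ∑ v ∈ S, z (i, v) ≤ 0) ∧
    ∑ v, z (i, v) = 0}
  add_mem' {z w} hz hw i := by
    simp only [PiLp.add_apply, sum_add_distrib]
    exact ⟨fun S hS => add_nonpos ((hz i).1 S hS) ((hw i).1 S hS), by
      rw [(hz i).2, (hw i).2, add_zero]⟩
  zero_mem' i := by simp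
  smul_mem' c z hz i := by
    simp only [PiLp.smul_apply, ← smul_sum]
    exact ⟨fun S hS => mul_nonpos_of_nonneg_of_nonpos c.2 ((hz i).1 S hS), by
      rw [(hz i).2, smul_zero]⟩

/-- The direction that moves mass from coordinate `u` to coordinate `v` of block `i`. -/
noncomputable def exchangeDir [DecidableEq ι] [DecidableEq V] :
    ι × V × V → EuclideanSpace ℝ (ι × V) :=
  fun (i, u, v) => EuclideanSpace.single (i, v) 1 - EuclideanSpace.single (i, u) 1

/-- The linear map `A y = ∑ᵢ yᵢ` adding up the blocks of a vector. -/
noncomputable def blockSum [Fintype ι] : EuclideanSpace ℝ (ι × V) →ₗ[ℝ] EuclideanSpace ℝ V where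
  toFun y := WithLp.toLp 2 fun v => ∑ i, y (i, v)
  map_add' y z := by ext v; simp [sum_add_distrib]
  map_smul' c y := by ext v; simp [mul_sum]

@[simp]
lemma blockSum_apply [Fintype ι] (y : EuclideanSpace ℝ (ι × V)) (v : V) :
    blockSum y v = ∑ i, y (i, v) := rfl

section BlockSum

variable [Fintype ι]

lemma norm_blockSum_le [Fintype V] (y : EuclideanSpace ℝ (ι × V)) :
    ‖blockSum y‖ ≤ √(Fintype.card ι) * ‖y‖ := by
  rw [EuclideanSpace.norm_eq, EuclideanSpace.norm_eq, ← Real.sqrt_mul (Nat.cast_nonneg _),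
    Fintype.sum_prod_type_right, mul_sum]
  gcongr with v
  simpa using sq_sum_le_card_mul_sum_sq (s := univ) (f := fun i => y (i, v))

lemma sum_blockSum_sub (x : EuclideanSpace ℝ (ι × V)) (s : EuclideanSpace ℝ V) (S : Finset V) :
    ∑ v ∈ S, (blockSum x - s) v = ∑ i, ∑ v ∈ S, x (i, v) - ∑ v ∈ S, s v := by
  simp only [PiLp.sub_apply, blockSum_apply, sum_sub_distrib]
  rw [sum_comm]

lemma norm_blockSum_sub_le_infDist [Fintype V] (y : EuclideanSpace ℝ (ι × V))
    {s : EuclideanSpace ℝ V} (hs : (blockSum (ι := ι) ⁻¹' {s}).Nonempty) :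
    ‖blockSum y - s‖ ≤ √(Fintype.card ι) * Metric.infDist y (blockSum ⁻¹' {s}) := by
  obtain ⟨a, rfl, hya⟩ := (isClosed_singleton.preimage
    blockSum.continuous_of_finiteDimensional).exists_infDist_eq_dist hs y
  rw [hya, dist_eq_norm, ← map_sub]
  exact norm_blockSum_le (y - a)

end BlockSum

section ExchangeDir

variable [DecidableEq ι] [DecidableEq V]

lemma exchangeDir_apply (i : ι) (u v : V) (q : ι × V) :
    exchangeDir (i, u, v) q = (if q = (i, v) then 1 else 0) - if q = (i, u) then 1 else 0 := by
  simp [exchangeDir]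

variable [Fintype V]

lemma ExchangeArc.exchangeDir_mem_tangentCone {f : ι → Finset V → ℝ}
    {x : EuclideanSpace ℝ (ι × V)} {i : ι} {u v : V}
    (harc : ExchangeArc (f i) (fun v => x (i, v)) u v) :
    exchangeDir (i, u, v) ∈ tangentCone f x := by
  intro j
  have sum_dir (S : Finset V) : ∑ w ∈ S, exchangeDir (i, u, v) (j, w) =
      if j = i then (if v ∈ S then 1 else 0) - (if u ∈ S then 1 else 0) else 0 := by
    by_cases hj : j = i <;> simp [exchangeDir_apply, sum_sub_distrib, hj]
  simp only [sum_dir]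
  obtain rfl | hj := eq_or_ne j i
  · simp only [if_true, mem_univ, sub_self, and_true]
    intro S hS
    have := harc S hS
    split_ifs <;> simp_all
  · simp [hj]

variable [Fintype ι]

lemma inner_exchangeDir_left (i : ι) (u v : V) (y : EuclideanSpace ℝ (ι × V)) :
    ⟪exchangeDir (i, u, v), y⟫_ℝ = y (i, v) - y (i, u) := by
  simp [exchangeDir, inner_sub_left, EuclideanSpace.inner_single_left]

lemma norm_exchangeDir_sq {u v : V} (i : ι) (huv : u ≠ v) :
    ‖exchangeDir (i, u, v)‖ ^ 2 = 2 := by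
  rw [← real_inner_self_eq_norm_sq, inner_exchangeDir_left]
  simp only [exchangeDir_apply, Prod.mk.injEq, true_and, huv, huv.symm, if_true, if_false]
  norm_num

lemma inner_exchangeDir_nonpos {u v u' v' : V} (i j : ι) (hu : u ≠ u') (hv : v ≠ v') :
    ⟪exchangeDir (i, u, v), exchangeDir (j, u', v')⟫_ℝ ≤ 0 := by
  simp only [inner_exchangeDir_left, exchangeDir_apply, Prod.mk.injEq, hu, hv, and_false, if_false]
  split_ifs <;> norm_num

lemma inner_blockSum_exchangeDir (g : EuclideanSpace ℝ V) (i : ι) (u v : V) :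
    ⟪g, blockSum (exchangeDir (i, u, v))⟫_ℝ = g v - g u := by
  have blockSum_single (w : V) :
      blockSum (EuclideanSpace.single (i, w) (1 : ℝ)) = EuclideanSpace.single w 1 := by
    ext w'
    simp [Prod.ext_iff, ite_and]
  simp [exchangeDir, blockSum_single, inner_sub_right, EuclideanSpace.inner_single_right]

lemma norm_sum_smul_exchangeDir_sq_le {F : Finset (ι × V × V)} {c : ι × V × V → ℝ}
    (hc : ∀ a ∈ F, 0 ≤ c a) (hne : ∀ a ∈ F, a.2.1 ≠ a.2.2)
    (hpair : (F : Set (ι × V × V)).Pairwise fun a b => a.2.1 ≠ b.2.1 ∧ a.2.2 ≠ b.2.2) :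
    ‖∑ a ∈ F, c a • exchangeDir a‖ ^ 2 ≤ 2 * ∑ a ∈ F, c a ^ 2 := by
  have hinner : (F : Set (ι × V × V)).Pairwise
      fun a b => ⟪c a • exchangeDir a, c b • exchangeDir b⟫_ℝ ≤ 0 := by
    intro a ha b hb hab
    obtain ⟨htail, hhead⟩ := hpair ha hb hab
    rw [real_inner_smul_left, real_inner_smul_right]
    exact mul_nonpos_of_nonneg_of_nonpos (hc a ha)
      (mul_nonpos_of_nonneg_of_nonpos (hc b hb) (inner_exchangeDir_nonpos _ _ htail hhead))
  refine (norm_sum_sq_le_of_inner_nonpos hinner).trans_eq ?_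
  rw [mul_sum]
  refine sum_congr rfl fun a ha => ?_
  rw [norm_smul, mul_pow, norm_exchangeDir_sq _ (hne a ha), Real.norm_eq_abs, sq_abs, mul_comm]

end ExchangeDir

variable [Fintype V] {f : ι → Finset V → ℝ} {x : EuclideanSpace ℝ (ι × V)}

lemma isCompact_basePolytopeProd (f : ι → Finset V → ℝ) : IsCompact (basePolytopeProd f) := by
  have hprod := isCompact_univ_pi fun i => isCompact_setOf_inBasePolytope (f i)
  convert hprod.image (f := fun w => WithLp.toLp 2 fun q : ι × V => w q.1 q.2) (by fun_prop)
  ext y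
  refine ⟨fun hy => ⟨fun i v => y (i, v), fun i _ => hy i, rfl⟩, ?_⟩
  rintro ⟨w, hw, rfl⟩ i
  exact hw i trivial

lemma eventually_add_smul_mem_basePolytopeProd [Finite ι] (hx : x ∈ basePolytopeProd f)
    {z : EuclideanSpace ℝ (ι × V)} (hz : z ∈ tangentCone f x) :
    ∀ᶠ ε in 𝓝[>] (0 : ℝ), x + ε • z ∈ basePolytopeProd f :=
  Filter.eventually_all.2 fun i =>
    eventually_inBasePolytope_add_smul (hx i) (hz i).1 (hz i).2

/-! ### The residual `Ax - s` -/

section Residual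

variable [Fintype ι] {s : EuclideanSpace ℝ V}

lemma sum_blockSum_sub_eq_zero (hs : InBasePolytope (fun S => ∑ i, f i S) s)
    (hx : x ∈ basePolytopeProd f) : ∑ v, (blockSum x - s) v = 0 := by
  rw [sum_blockSum_sub, hs.2, sub_eq_zero]
  exact sum_congr rfl fun i _ => (hx i).2

variable [DecidableEq V]

lemma exists_exchangeArc_crossing (hsub : ∀ i, Submodular (f i))
    (hs : InBasePolytope (fun S => ∑ i, f i S) s) (hx : x ∈ basePolytopeProd f) {w w' : V}
    (hw : (blockSum x - s) w < (blockSum x - s) w') :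
    ∃ i u v, ExchangeArc (f i) (fun v => x (i, v)) u v ∧
      (blockSum x - s) w ∈ Set.Ico ((blockSum x - s) v) ((blockSum x - s) u) := by
  by_contra! hnone
  let L : Finset V := {v | (blockSum x - s) v ≤ (blockSum x - s) w}
  have hL (i : ι) : IsTight (f i) (fun v => x (i, v)) L := by
    refine isTight_of_forall_not_exchangeArc (hsub i) (hx i) ⟨w, by simp [L]⟩
      fun u hu v hv harc => hnone i u v harc ⟨(mem_filter.1 hv).2, ?_⟩
    simpa only [L, mem_filter, mem_univ, true_and, not_le] using hu
  have hneg : ∑ v ∈ L, (blockSum x - s) v < 0 :=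
    sum_filter_le_neg (sum_blockSum_sub_eq_zero hs hx) hw
  rw [sum_blockSum_sub, sum_congr rfl fun i _ => hL i] at hneg
  exact hneg.not_ge (sub_nonneg.2 (hs.1 L))

lemma exists_finset_exchangeArc (hsub : ∀ i, Submodular (f i))
    (hs : InBasePolytope (fun S => ∑ i, f i S) s) (hx : x ∈ basePolytopeProd f) :
    ∃ F : Finset (ι × V × V),
      (∀ a ∈ F, ExchangeArc (f a.1) (fun v => x (a.1, v)) a.2.1 a.2.2) ∧
      (∀ a ∈ F, (blockSum x - s) a.2.2 < (blockSum x - s) a.2.1) ∧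
      (F : Set (ι × V × V)).Pairwise (fun a b => a.2.1 ≠ b.2.1 ∧ a.2.2 ≠ b.2.2) ∧
      ‖blockSum x - s‖ ^ 2 ≤ (Fintype.card V : ℝ) ^ 2 / 8 *
        ∑ a ∈ F, ((blockSum x - s) a.2.1 - (blockSum x - s) a.2.2) ^ 2 := by
  classical
  set g := blockSum x - s
  have hcover : ∀ t ∈ {t | ∃ w w', g w = t ∧ t < g w'},
      ∃ a ∈ ({a | ExchangeArc (f a.1) (fun v => x (a.1, v)) a.2.1 a.2.2} : Finset (ι × V × V)),
        t ∈ Set.Ico (g a.2.2) (g a.2.1) := by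
    rintro _ ⟨w, w', rfl, hw⟩
    obtain ⟨i, u, v, harc, hmem⟩ := exists_exchangeArc_crossing hsub hs hx hw
    exact ⟨(i, u, v), by simpa using harc, hmem⟩
  obtain ⟨F, hFA, hF, hlt, head_inj, tail_inj⟩ := exists_Ico_subcover_injOn hcover
  refine ⟨F, fun a ha => (mem_filter.1 (hFA ha)).2, hlt, fun a ha b hb hab => ?_, ?_⟩
  · exact ⟨fun h => hab (tail_inj ha hb (congrArg g h)),
      fun h => hab (head_inj ha hb (congrArg g h))⟩
  · rw [EuclideanSpace.real_norm_sq_eq]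
    exact sum_sq_le_sum_sq_of_cover (sum_blockSum_sub_eq_zero hs hx) (fun a ha => (hlt a ha).le)
      fun w ⟨w', hw⟩ => hF _ ⟨w, w', rfl, hw⟩

lemma exists_descent_direction (hsub : ∀ i, Submodular (f i))
    (hs : InBasePolytope (fun S => ∑ i, f i S) s) (hx : x ∈ basePolytopeProd f)
    (hxs : blockSum x ≠ s) :
    ∃ z ∈ tangentCone f x, ⟪blockSum x - s, blockSum z⟫_ℝ < 0 ∧
      ‖blockSum x - s‖ * ‖z‖ ≤ Fintype.card V / 2 * -⟪blockSum x - s, blockSum z⟫_ℝ := by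
  classical
  obtain ⟨F, harc, hlt, hpair, hnorm⟩ := exists_finset_exchangeArc hsub hs hx
  set g := blockSum x - s
  let c : ι × V × V → ℝ := fun a => g a.2.1 - g a.2.2
  let σ : ℝ := ∑ a ∈ F, c a ^ 2
  let z : EuclideanSpace ℝ (ι × V) := ∑ a ∈ F, c a • exchangeDir a
  have c_nonneg (a) (ha : a ∈ F) : 0 ≤ c a := sub_nonneg.2 (hlt a ha).le
  have z_mem : z ∈ tangentCone f x := sum_mem fun a ha =>
    (tangentCone f x).smul_mem (c_nonneg a ha) (harc a ha).exchangeDir_mem_tangentCone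
  have inner_z : ⟪g, blockSum z⟫_ℝ = -σ := by
    simp only [z, σ, map_sum, map_smul, inner_sum, inner_smul_right, ← sum_neg_distrib]
    refine sum_congr rfl fun a _ => ?_
    rw [inner_blockSum_exchangeDir]
    ring
  have norm_z : ‖z‖ ^ 2 ≤ 2 * σ := norm_sum_smul_exchangeDir_sq_le c_nonneg
    (fun a ha h => (hlt a ha).ne (congrArg g h).symm) hpair
  have σ_pos : 0 < σ := by
    have hg : 0 < ‖g‖ ^ 2 := pow_pos (norm_pos_iff.2 (sub_ne_zero.2 hxs)) 2
    exact pos_of_mul_pos_right (hg.trans_le hnorm) (by positivity)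
  refine ⟨z, z_mem, by rw [inner_z]; exact neg_lt_zero.2 σ_pos, ?_⟩
  rw [inner_z, neg_neg]
  refine le_of_sq_le_sq ?_ (by positivity)
  calc (‖g‖ * ‖z‖) ^ 2 = ‖g‖ ^ 2 * ‖z‖ ^ 2 := mul_pow _ _ _
    _ ≤ (Fintype.card V : ℝ) ^ 2 / 8 * σ * (2 * σ) := by gcongr
    _ = (Fintype.card V / 2 * σ) ^ 2 := by ring

lemma exists_blockSum_eq_dist_le (hsub : ∀ i, Submodular (f i))
    (hs : InBasePolytope (fun S => ∑ i, f i S) s) {y : EuclideanSpace ℝ (ι × V)}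
    (hy : y ∈ basePolytopeProd f) {C : ℝ} (hC : Fintype.card V / 2 < C) :
    ∃ x ∈ basePolytopeProd f, blockSum x = s ∧ dist y x ≤ C * ‖blockSum y - s‖ := by
  have C_pos : 0 < C := hC.trans_le' (by positivity)
  have residual_cont : Continuous fun x : EuclideanSpace ℝ (ι × V) => ‖blockSum x - s‖ :=
    (blockSum.continuous_of_finiteDimensional.sub continuous_const).norm
  have hdesc : ∀ x ∈ basePolytopeProd f, ‖blockSum x - s‖ ≠ 0 →
      ∃ x' ∈ basePolytopeProd f, ‖blockSum x' - s‖ < ‖blockSum x - s‖ ∧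
        dist x x' ≤ C * (‖blockSum x - s‖ - ‖blockSum x' - s‖) := by
    intro x hx hxs
    obtain ⟨z, hz, hneg, hslope⟩ :=
      exists_descent_direction hsub hs hx (sub_ne_zero.1 (norm_ne_zero_iff.1 hxs))
    have hstep := eventually_mul_lt_mul_norm_sub_norm_add_smul C_pos.le
      (hslope.trans_lt (mul_lt_mul_of_pos_right hC (neg_pos.2 hneg)))
    obtain ⟨ε, ⟨hdrop, hmem⟩, ε_pos⟩ := ((hstep.and
      (eventually_add_smul_mem_basePolytopeProd hx hz)).and self_mem_nhdsWithin).exists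
    have ε_nonneg : 0 ≤ ε := le_of_lt ε_pos
    have residual_eq : blockSum (x + ε • z) - s = blockSum x - s + ε • blockSum z := by
      rw [map_add, map_smul, add_sub_right_comm]
    have dist_eq : dist x (x + ε • z) = ε * ‖z‖ := by
      rw [dist_self_add_right, norm_smul, Real.norm_of_nonneg ε_nonneg]
    rw [← residual_eq, ← dist_eq] at hdrop
    refine ⟨_, hmem, sub_pos.1 ?_, hdrop.le⟩
    exact pos_of_mul_pos_right (dist_nonneg.trans_lt hdrop) C_pos.le
  obtain ⟨x, hx, hxs, hyx⟩ :=
    exists_eq_zero_dist_le_of_descent (isCompact_basePolytopeProd f) residual_cont hdesc hy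
  exact ⟨x, hx, sub_eq_zero.1 (norm_eq_zero.1 hxs), hyx⟩

lemma infDist_le_norm_blockSum_sub (hsub : ∀ i, Submodular (f i))
    (hs : InBasePolytope (fun S => ∑ i, f i S) s) {y : EuclideanSpace ℝ (ι × V)}
    (hy : y ∈ basePolytopeProd f) :
    Metric.infDist y (basePolytopeProd f ∩ blockSum ⁻¹' {s}) ≤
      Fintype.card V / 2 * ‖blockSum y - s‖ := by
  have hlim : Filter.Tendsto (· * ‖blockSum y - s‖) (𝓝[>] (Fintype.card V / 2 : ℝ))
      (𝓝 (Fintype.card V / 2 * ‖blockSum y - s‖)) :=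
    (Filter.tendsto_id.mul_const _).mono_left nhdsWithin_le_nhds
  refine ge_of_tendsto hlim ?_
  filter_upwards [self_mem_nhdsWithin] with C hC
  obtain ⟨x, hx, hxs, hdist⟩ := exists_blockSum_eq_dist_le hsub hs hy hC
  have hmem : x ∈ basePolytopeProd f ∩ blockSum ⁻¹' {s} := ⟨hx, hxs⟩
  exact (Metric.infDist_le_dist_of_mem hmem).trans hdist

end Residual

end Product

/-! ### The distance bound -/

lemma norm2_eq_norm_toLp {ι : Type*} [Fintype ι] (x : ι → ℝ) : norm2 x = ‖WithLp.toLp 2 x‖ := by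
  simp [norm2, EuclideanSpace.norm_eq]

lemma distSet_eq_infDist {ι : Type*} [Fintype ι] (y : ι → ℝ) (K : Set (ι → ℝ)) :
    distSet y K = Metric.infDist (WithLp.toLp 2 y) (WithLp.ofLp ⁻¹' K) := by
  have himage : (WithLp.ofLp ⁻¹' K : Set (EuclideanSpace ℝ ι)) = WithLp.toLp 2 '' K :=
    ((WithLp.equiv 2 (ι → ℝ)).symm.image_eq_preimage_symm K).symm
  rw [distSet, himage, Metric.infDist_eq_iInf, ← sInf_image', Set.image_image]
  simp only [norm2_eq_norm_toLp, WithLp.toLp_sub, dist_eq_norm]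

theorem kappa_bound_on_P_general {ι V : Type*} [Fintype ι] [Fintype V] [DecidableEq V]
    (f : ι → Finset V → ℝ) (hsub : ∀ i, Submodular (f i)) (s : V → ℝ)
    (hs : InBasePolytope (fun S => ∑ i, f i S) s) (y : ι × V → ℝ)
    (hy : ∀ i, InBasePolytope (f i) fun v => y (i, v)) :
    distSet y {x | (∀ i, InBasePolytope (f i) fun v => x (i, v)) ∧ ∀ v, ∑ i, x (i, v) = s v} ≤
      (Fintype.card V * √(Fintype.card ι) / 2) * distSet y {a | ∀ v, ∑ i, a (i, v) = s v} := by
  have hfiber : (WithLp.ofLp ⁻¹' {a | ∀ v, ∑ i, a (i, v) = s v} : Set (EuclideanSpace ℝ (ι × V))) =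
      blockSum ⁻¹' {WithLp.toLp 2 s} := by
    ext a
    simp [PiLp.ext_iff]
  have hs' : InBasePolytope (fun S => ∑ i, f i S) (WithLp.toLp 2 s) := hs
  have hy' : WithLp.toLp 2 y ∈ basePolytopeProd f := hy
  have hne : (blockSum (ι := ι) ⁻¹' {WithLp.toLp 2 s}).Nonempty := by
    obtain ⟨x, -, hxs, -⟩ := exists_blockSum_eq_dist_le hsub hs' hy' (lt_add_one _)
    exact ⟨x, hxs⟩
  rw [distSet_eq_infDist, distSet_eq_infDist, Set.ofPred_and, Set.preimage_inter, hfiber,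
    mul_div_right_comm, mul_assoc]
  refine (infDist_le_norm_blockSum_sub hsub hs' hy').trans ?_
  gcongr
  exact norm_blockSum_sub_le_infDist _ hne

/-- for every `y ∈ 𝒫 \ E` one has `d(y, E) ≤ (n√r/2) · d(y, 𝒜')`,
i.e. `κ(y) ≤ n√r/2`. -/
theorem kappa_bound_on_P
    {V : Type*} [Fintype V] [DecidableEq V] (r : ℕ)
    (f : Fin r → Finset V → ℝ)
    (hsub : ∀ i, Submodular (f i)) (h0 : ∀ i, f i ∅ = 0)
    (sstar : V → ℝ)
    (hsB : InBasePolytope (fun S => ∑ i, f i S) sstar)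
    (hsMin : ∀ z : V → ℝ, InBasePolytope (fun S => ∑ i, f i S) z →
      ∑ v, sstar v ^ 2 ≤ ∑ v, z v ^ 2)
    (P A' E : Set (Fin r × V → ℝ))
    (hP : P = {y | ∀ i, InBasePolytope (f i) (fun v => y (i, v))})
    (hA' : A' = {a | ∀ v, ∑ i, a (i, v) = sstar v})
    (hE : E = {y ∈ P | ∀ v, ∑ i, y (i, v) = sstar v})
    (y : Fin r × V → ℝ) (hyP : y ∈ P) (hyE : y ∉ E) :
    distSet y E ≤ ((Fintype.card V : ℝ) * Real.sqrt r / 2) * distSet y A' := by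
  subst hP hA' hE
  simpa using kappa_bound_on_P_general f hsub sstar hsB y hyP
end

section
/- The set E = {y ∈ 𝒫 : Ay = s*} is nonempty. -/
open Finset

/-!
The point is that `B(f) ⊆ ∑ i, B(f i)`. The Minkowski sum `K = ∑ i, B(f i)` is compact and convex,
so by separation it is enough to find, for every `s ∈ B(f)` and every weight `w`, a point `y ∈ K`
with `⟨w, s⟩ ≤ ⟨w, y⟩`. Order `V` so that `w` is decreasing. By Abel summation the greedy vector of
`f` maximises `w` over `B(f)`; it is the sum of the greedy vectors of the `f i`, and these lie in
`B(f i)` by submodularity.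
-/

theorem mem_of_forall_exists_le_dotProduct {V : Type*} [Fintype V] {K : Set (V → ℝ)}
    (hconv : Convex ℝ K) (hclosed : IsClosed K) {x : V → ℝ}
    (hx : ∀ w : V → ℝ, ∃ y ∈ K, w ⬝ᵥ x ≤ w ⬝ᵥ y) : x ∈ K := by
  classical
  by_contra hxK
  obtain ⟨l, u, hlt, hu⟩ := geometric_hahn_banach_closed_point hconv hclosed hxK
  obtain ⟨w, hw⟩ := (dotProductEquiv ℝ V).surjective l.toLinearMap
  have hl (z : V → ℝ) : w ⬝ᵥ z = l z := LinearMap.congr_fun hw z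
  obtain ⟨y, hyK, hxy⟩ := hx w
  rw [hl, hl] at hxy
  exact absurd hxy (not_le.2 ((hlt y hyK).trans hu))

section BasePolytope

variable {V : Type*} [Fintype V] (g : Finset V → ℝ)

theorem convex_setOf_inBasePolytope : Convex ℝ {x | InBasePolytope g x} := by
  have hlin (S : Finset V) : IsLinearMap ℝ fun x : V → ℝ => ∑ v ∈ S, x v :=
    ⟨fun x y => sum_add_distrib, fun c x => (mul_sum S x c).symm⟩
  simp only [InBasePolytope, Set.ofPred_and, Set.ofPred_forall]
  exact (convex_iInter fun S => convex_halfSpace_le (hlin S) _).inter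
    (convex_hyperplane (hlin univ) _)

theorem isClosed_setOf_inBasePolytope_s6 : IsClosed {x | InBasePolytope g x} := by
  simp only [InBasePolytope, Set.ofPred_and, Set.ofPred_forall]
  exact (isClosed_iInter fun S => isClosed_le (by fun_prop) continuous_const).inter
    (isClosed_eq (by fun_prop) continuous_const)

theorem isCompact_setOf_inBasePolytope_s6 : IsCompact {x | InBasePolytope g x} := by
  classical
  refine (isCompact_Icc (a := fun v => g univ - g (univ.erase v))
    (b := fun v => g {v})).of_isClosed_subset (isClosed_setOf_inBasePolytope_s6 g) ?_
  rintro x ⟨hle, htotal⟩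
  refine ⟨fun v => ?_, fun v => by simpa only [sum_singleton] using hle {v}⟩
  have hsplit := add_sum_erase univ x (mem_univ v)
  change g univ - g (univ.erase v) ≤ x v
  linarith [hle (univ.erase v)]

end BasePolytope

section AbelSummation

variable {V R : Type*} [LinearOrder V] [Ring R]

theorem sum_mul_nonneg_of_antitoneOn [PartialOrder R] [IsOrderedRing R] {S : Finset V}
    {w d : V → R} (hw : AntitoneOn w S) (hw0 : ∀ v ∈ S, 0 ≤ w v)
    (hd : ∀ a ∈ S, 0 ≤ ∑ v ∈ S with v ≤ a, d v) :
    0 ≤ ∑ v ∈ S, w v * d v := by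
  induction S using Finset.induction_on_max generalizing w with
  | empty => simp
  | insert a S ha ih =>
    have haS : a ∉ S := fun h => (ha a h).false
    have hshift : 0 ≤ ∑ v ∈ S, (w v - w a) * d v := by
      refine ih (fun u hu v hv huv => ?_) (fun v hv => ?_) fun b hb => ?_
      · exact sub_le_sub_right (hw (mem_insert_of_mem hu) (mem_insert_of_mem hv) huv) _
      · exact sub_nonneg.2 (hw (mem_insert_of_mem hv) (mem_insert_self a S) (ha v hv).le)
      · simpa only [filter_insert, (ha b hb).not_ge, if_false] using hd b (mem_insert_of_mem hb)
    have htotal : 0 ≤ ∑ v ∈ insert a S, d v := by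
      have hle : ∀ v ∈ insert a S, v ≤ a :=
        (forall_mem_insert _ _ _).2 ⟨le_rfl, fun v hv => (ha v hv).le⟩
      simpa only [filter_true_of_mem hle] using hd a (mem_insert_self a S)
    calc
      0 ≤ ∑ v ∈ S, (w v - w a) * d v + w a * ∑ v ∈ insert a S, d v :=
        add_nonneg hshift (mul_nonneg (hw0 a (mem_insert_self a S)) htotal)
      _ = ∑ v ∈ insert a S, w v * d v := by
        simp only [sum_insert haS, sub_mul, sum_sub_distrib, mul_add, mul_sum]
        abel

theorem dotProduct_le_dotProduct_of_antitone [LinearOrder R] [IsOrderedRing R] [Fintype V]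
    [LocallyFiniteOrderBot V] {w x y : V → R} (hw : Antitone w)
    (hle : ∀ a, ∑ v ∈ Iic a, x v ≤ ∑ v ∈ Iic a, y v)
    (htotal : ∑ v, x v = ∑ v, y v) : w ⬝ᵥ x ≤ w ⬝ᵥ y := by
  obtain ⟨c, hc⟩ := (Set.finite_range w).bddBelow
  have hshift : 0 ≤ ∑ v, (w v - c) * (y v - x v) := by
    refine sum_mul_nonneg_of_antitoneOn (fun u _ v _ huv => sub_le_sub_right (hw huv) c)
      (fun v _ => sub_nonneg.2 (hc ⟨v, rfl⟩)) fun a _ => ?_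
    simpa only [filter_ge_eq_Iic, sum_sub_distrib, sub_nonneg] using hle a
  have hexpand : ∑ v, (w v - c) * (y v - x v) = w ⬝ᵥ y - w ⬝ᵥ x - c * (∑ v, y v - ∑ v, x v) := by
    simp only [dotProduct, mul_sub, sub_mul, sum_sub_distrib, mul_sum]
    abel
  rwa [hexpand, htotal, sub_self, mul_zero, sub_zero, sub_nonneg] at hshift

end AbelSummation

section Greedy

variable {V : Type*} [LinearOrder V] [LocallyFiniteOrderBot V]

/-- The greedy vector of `g`: the increments of `g` as the elements of `V` are added one at a time
in increasing order. For submodular `g` it is the extreme point of the base polytope produced by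
the greedy algorithm. -/
def greedyVector (g : Finset V → ℝ) (v : V) : ℝ :=
  g (Iic v) - g (Iio v)

variable {g : Finset V → ℝ}

theorem greedyVector_le_insert_sub (hg : Submodular g) {a : V} {S : Finset V}
    (ha : ∀ v ∈ S, v < a) : greedyVector g a ≤ g (insert a S) - g S := by
  have hSa : S ⊆ Iio a := fun v hv => mem_Iio.2 (ha v hv)
  have hunion : insert a S ∪ Iio a = Iic a := by
    rw [insert_union, union_eq_right.2 hSa, Iio_insert]
  have hinter : insert a S ∩ Iio a = S := by
    rw [insert_inter_of_notMem (by simp), inter_eq_left.2 hSa]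
  have hsub := hg (insert a S) (Iio a)
  rw [hunion, hinter] at hsub
  rw [greedyVector]
  linarith

theorem sum_greedyVector_le (hg : Submodular g) (S : Finset V) :
    ∑ v ∈ S, greedyVector g v ≤ g S - g ∅ := by
  induction S using Finset.induction_on_max with
  | empty => simp
  | insert a S ha ih =>
    rw [sum_insert fun h => (ha a h).false]
    linarith [greedyVector_le_insert_sub hg ha]

theorem sum_greedyVector_of_isLowerSet (g : Finset V → ℝ) {S : Finset V}
    (hS : IsLowerSet (S : Set V)) : ∑ v ∈ S, greedyVector g v = g S - g ∅ := by
  induction S using Finset.induction_on_max with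
  | empty => simp
  | insert a S ha ih =>
    have hSa : S = Iio a := by
      ext v
      refine ⟨fun hv => mem_Iio.2 (ha v hv), fun hv => ?_⟩
      have hva := mem_Iio.1 hv
      exact mem_of_mem_insert_of_ne (hS hva.le (mem_insert_self a S)) hva.ne
    have hlower : IsLowerSet (S : Set V) := by
      rw [hSa, coe_Iio]
      exact isLowerSet_Iio a
    rw [sum_insert fun h => (ha a h).false, ih hlower, greedyVector, ← Iio_insert, ← hSa]
    ring

theorem sum_greedyVector {ι : Type*} [Fintype ι] (f : ι → Finset V → ℝ) :
    ∑ i, greedyVector (f i) = greedyVector fun S => ∑ i, f i S := by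
  ext v
  simp only [greedyVector, Finset.sum_apply, sum_sub_distrib]

variable [Fintype V]

theorem inBasePolytope_greedyVector (hg : Submodular g) (h0 : g ∅ = 0) :
    InBasePolytope g (greedyVector g) := by
  constructor
  · intro S
    simpa only [h0, sub_zero] using sum_greedyVector_le hg S
  · simpa only [h0, sub_zero] using
      sum_greedyVector_of_isLowerSet g (S := univ) (by simpa only [coe_univ] using isLowerSet_univ)

theorem InBasePolytope.dotProduct_le_greedyVector {x w : V → ℝ} (hx : InBasePolytope g x)
    (h0 : g ∅ = 0) (hw : Antitone w) : w ⬝ᵥ x ≤ w ⬝ᵥ greedyVector g := by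
  have hsum {S : Finset V} (hS : IsLowerSet (S : Set V)) : ∑ v ∈ S, greedyVector g v = g S := by
    rw [sum_greedyVector_of_isLowerSet g hS, h0, sub_zero]
  refine dotProduct_le_dotProduct_of_antitone hw (fun a => ?_) ?_
  · rw [hsum (by simpa only [coe_Iic] using isLowerSet_Iic a)]
    exact hx.1 _
  · rw [hsum (by simpa only [coe_univ] using isLowerSet_univ)]
    exact hx.2

end Greedy

section Decomposition

variable {ι V : Type*} [Fintype ι] [Fintype V] [DecidableEq V] {f : ι → Finset V → ℝ}

theorem exists_inBasePolytope_dotProduct_le_sum (hsub : ∀ i, Submodular (f i))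
    (h0 : ∀ i, f i ∅ = 0) {s : V → ℝ} (hs : InBasePolytope (fun S => ∑ i, f i S) s) (w : V → ℝ) :
    ∃ y : ι → V → ℝ, (∀ i, InBasePolytope (f i) (y i)) ∧ w ⬝ᵥ s ≤ w ⬝ᵥ ∑ i, y i := by
  obtain ⟨_, hw, -⟩ := monovary_iff_exists_antitone.1 (monovary_self w)
  let : LocallyFiniteOrderBot V := .ofIic V (fun a => {v | v ≤ a}) (by simp)
  refine ⟨fun i => greedyVector (f i), fun i => ?_, ?_⟩
  · -- `convert` reconciles the given `DecidableEq V` with the one bundled in the linear order.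
    exact inBasePolytope_greedyVector (by convert hsub i) (h0 i)
  · rw [sum_greedyVector]
    exact hs.dotProduct_le_greedyVector (sum_eq_zero fun i _ => h0 i) hw

theorem E_nonempty_general (hsub : ∀ i, Submodular (f i)) (h0 : ∀ i, f i ∅ = 0) {s : V → ℝ}
    (hs : InBasePolytope (fun S => ∑ i, f i S) s) :
    ∃ y : ι × V → ℝ, (∀ i, InBasePolytope (f i) (fun v => y (i, v))) ∧
      ∀ v, ∑ i, y (i, v) = s v := by
  let P : Set (ι → V → ℝ) := Set.univ.pi fun i => {x | InBasePolytope (f i) x}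
  let A : (ι → V → ℝ) →ₗ[ℝ] V → ℝ := ∑ i, LinearMap.proj i
  have hA (y : ι → V → ℝ) : A y = ∑ i, y i := by simp [A]
  have hconv : Convex ℝ (A '' P) :=
    (convex_pi fun i _ => convex_setOf_inBasePolytope (f i)).linear_image A
  have hcompact : IsCompact (A '' P) :=
    (isCompact_univ_pi fun i => isCompact_setOf_inBasePolytope_s6 (f i)).image
      A.continuous_of_finiteDimensional
  obtain ⟨y, hy, hys⟩ : s ∈ A '' P := by
    refine mem_of_forall_exists_le_dotProduct hconv hcompact.isClosed fun w => ?_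
    obtain ⟨y, hy, hle⟩ := exists_inBasePolytope_dotProduct_le_sum hsub h0 hs w
    exact ⟨A y, ⟨y, fun i _ => hy i, rfl⟩, by rwa [hA]⟩
  refine ⟨fun p => y p.1 p.2, fun i => hy i (Set.mem_univ i), fun v => ?_⟩
  rw [← hys, hA, Finset.sum_apply]

end Decomposition

/-- the set `E = {y ∈ 𝒫 : Ay = s*}` is nonempty. -/
theorem E_nonempty
    {V : Type*} [Fintype V] [DecidableEq V] (r : ℕ)
    (f : Fin r → Finset V → ℝ)
    (hsub : ∀ i, Submodular (f i)) (h0 : ∀ i, f i ∅ = 0)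
    (sstar : V → ℝ)
    (hsB : InBasePolytope (fun S => ∑ i, f i S) sstar)
    (hsMin : ∀ z : V → ℝ, InBasePolytope (fun S => ∑ i, f i S) z →
      ∑ v, sstar v ^ 2 ≤ ∑ v, z v ^ 2) :
    ∃ y : Fin r × V → ℝ,
      (∀ i, InBasePolytope (f i) (fun v => y (i, v))) ∧
      ∀ v, ∑ i, y (i, v) = sstar v :=
  E_nonempty_general hsub h0 hsB
end

section
/- Let g : 2^C → ℝ be submodular on a finite set C with g(∅) = 0, let x ∈ ℝ^C, and let u, v ∈ C be distinct. Define w ∈ ℝ^C by w(u) = −(g({u}) + 1), w(v) = −(g(C) − g(C \ {v}) − 1), and w(a) = −x(a) for a ∈ C \ {u, v}. Then every minimizer A of S ↦ g(S) + w(S) over subsets S ⊆ C satisfies u ∈ A and v ∉ A; consequently A is also a minimizer of S ↦ g(S) − x(S) over {S ⊆ C : u ∈ S, v ∉ S}, so min{g(S) − x(S) : S ⊆ C, u ∈ S, v ∉ S} can be computed from one minimization of g + w. -/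
open Finset

/-!
Submodularity is diminishing returns. The gain of adding `u` to a set is at most `g {u} - g ∅`, so a
weight on `u` below the negative of that bound forces `u` into every minimizer; the loss of removing
`v` is at least `g univ - g (univ.erase v)`, so a weight on `v` above the negative of that bound
forces `v` out. Once `u ∈ A` and `v ∉ A` are known, comparing `A` with another set of the same kind
involves only weights at points other than `u` and `v`, where `w = -x`.
-/

section WeightComparison

variable {C M : Type*} [DecidableEq C] [AddCommGroup M] {f k : C → M} {S T : Finset C}

theorem sum_sub_sum_congr_of_symmDiff (h : ∀ a ∈ symmDiff S T, f a = k a) :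
    ∑ a ∈ S, f a - ∑ a ∈ T, f a = ∑ a ∈ S, k a - ∑ a ∈ T, k a := by
  rw [← sum_sdiff_sub_sum_sdiff, ← sum_sdiff_sub_sum_sdiff (f := k)]
  exact congrArg₂ (· - ·)
    (sum_congr rfl fun a ha => h a (mem_symmDiff.2 (.inl (mem_sdiff.1 ha))))
    (sum_congr rfl fun a ha => h a (mem_symmDiff.2 (.inr (mem_sdiff.1 ha))))

theorem add_sum_le_add_sum_congr_of_symmDiff [PartialOrder M] [IsOrderedAddMonoid M]
    (g : Finset C → M) (h : ∀ a ∈ symmDiff S T, f a = k a) :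
    g S + ∑ a ∈ S, f a ≤ g T + ∑ a ∈ T, f a ↔ g S + ∑ a ∈ S, k a ≤ g T + ∑ a ∈ T, k a := by
  have le_iff_sum_sub_sum_le (l : C → M) : g S + ∑ a ∈ S, l a ≤ g T + ∑ a ∈ T, l a ↔
      ∑ a ∈ S, l a - ∑ a ∈ T, l a ≤ g T - g S := by
    rw [sub_le_sub_iff, add_comm (g S)]
  rw [le_iff_sum_sub_sum_le, le_iff_sum_sub_sum_le, sum_sub_sum_congr_of_symmDiff h]

end WeightComparison

/-- Submodularity of a set function on the finite subsets of a possibly infinite type, with values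
in any ordered additive structure; `Submodular` is the real-valued case. -/
def IsSubmodular {C M : Type*} [DecidableEq C] [Add M] [LE M] (g : Finset C → M) : Prop :=
  ∀ X Y : Finset C, g (X ∪ Y) + g (X ∩ Y) ≤ g X + g Y

namespace IsSubmodular

variable {C M : Type*} [DecidableEq C] [AddCommGroup M] [PartialOrder M] [IsOrderedAddMonoid M]
  {g : Finset C → M} {w : C → M} {A B : Finset C} {u v : C}

theorem insert_sub_le_insert_sub (hg : IsSubmodular g) (hAB : A ⊆ B) (hu : u ∉ B) :
    g (insert u B) - g B ≤ g (insert u A) - g A := by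
  have h := hg (insert u A) B
  rw [insert_union, union_eq_right.2 hAB, insert_inter_of_notMem hu, inter_eq_left.2 hAB] at h
  exact sub_le_sub_iff.2 h

theorem sub_erase_le_sub_erase (hg : IsSubmodular g) (hAB : A ⊆ B) (hv : v ∈ A) :
    g B - g (B.erase v) ≤ g A - g (A.erase v) := by
  have h := hg.insert_sub_le_insert_sub (erase_subset_erase v hAB) (notMem_erase v B)
  rwa [insert_erase hv, insert_erase (hAB hv)] at h

theorem mem_of_add_sum_le_insert (hg : IsSubmodular g) (hu : g {u} + w u < g ∅)
    (hA : g A + ∑ a ∈ A, w a ≤ g (insert u A) + ∑ a ∈ insert u A, w a) : u ∈ A := by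
  by_contra huA
  have gain_le : g (insert u A) - g A ≤ g {u} - g ∅ := by
    simpa using hg.insert_sub_le_insert_sub (empty_subset A) huA
  have neg_weight_le : -w u ≤ g (insert u A) - g A := by
    rw [sum_insert huA, ← add_assoc, add_le_add_iff_right] at hA
    rwa [neg_le_sub_iff_le_add]
  have lt_neg_weight : g {u} - g ∅ < -w u := by
    rwa [sub_lt_iff_lt_add, neg_add_eq_sub, lt_sub_iff_add_lt]
  exact (gain_le.trans_lt lt_neg_weight).not_ge neg_weight_le

theorem notMem_of_add_sum_le_erase (hg : IsSubmodular g) (hAB : A ⊆ B)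
    (hv : g (B.erase v) < g B + w v)
    (hA : g A + ∑ a ∈ A, w a ≤ g (A.erase v) + ∑ a ∈ A.erase v, w a) : v ∉ A := by
  intro hvA
  have le_loss : g B - g (B.erase v) ≤ g A - g (A.erase v) := hg.sub_erase_le_sub_erase hAB hvA
  have loss_le_neg_weight : g A - g (A.erase v) ≤ -w v := by
    rw [← add_sum_erase A w hvA, ← add_assoc, add_le_add_iff_right] at hA
    rwa [sub_le_iff_le_add, neg_add_eq_sub, le_sub_iff_add_le]
  have neg_weight_lt : -w v < g B - g (B.erase v) := by
    rwa [lt_sub_iff_add_lt, neg_add_eq_sub, sub_lt_iff_lt_add]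
  exact neg_weight_lt.not_ge (le_loss.trans loss_le_neg_weight)

end IsSubmodular

/-- The finite set `B` takes the place of the ground set: `C` may be infinite here. -/
theorem exchange_capacity_via_single_minimization_general
    {C M : Type*} [DecidableEq C] [AddCommGroup M] [PartialOrder M] [IsOrderedAddMonoid M]
    {g : Finset C → M} (hg : IsSubmodular g) {x w : C → M} {u v : C} {A B : Finset C}
    (hAB : A ⊆ B) (hwu : g {u} + w u < g ∅) (hwv : g (B.erase v) < g B + w v)
    (hwx : ∀ a, a ≠ u → a ≠ v → w a = -x a)
    (hA : ∀ S : Finset C, g A + ∑ a ∈ A, w a ≤ g S + ∑ a ∈ S, w a) :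
    u ∈ A ∧ v ∉ A ∧
      ∀ S : Finset C, u ∈ S → v ∉ S → g A - ∑ a ∈ A, x a ≤ g S - ∑ a ∈ S, x a := by
  have huA : u ∈ A := hg.mem_of_add_sum_le_insert hwu (hA (insert u A))
  have hvA : v ∉ A := hg.notMem_of_add_sum_le_erase hAB hwv (hA (A.erase v))
  refine ⟨huA, hvA, fun S huS hvS => ?_⟩
  have weights_eq : ∀ a ∈ symmDiff A S, w a = -x a := by
    intro a ha
    rw [mem_symmDiff] at ha
    exact hwx a (by grind) (by grind)
  simpa only [sum_neg_distrib, ← sub_eq_add_neg] using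
    (add_sum_le_add_sum_congr_of_symmDiff g weights_eq).1 (hA S)

/-- Lemma 5.1: with the weight vector `w` as defined, every minimizer
`A` of `g + w` satisfies `u ∈ A`, `v ∉ A`, and hence minimizes `g - x` over
`{S : u ∈ S, v ∉ S}`. -/
theorem exchange_capacity_via_single_minimization
    {C : Type*} [Fintype C] [DecidableEq C]
    (g : Finset C → ℝ) (hsub : Submodular g) (h0 : g ∅ = 0)
    (x : C → ℝ) (u v : C) (huv : u ≠ v) (w : C → ℝ)
    (hwu : w u = -(g {u} + 1))
    (hwv : w v = -(g Finset.univ - g (Finset.univ.erase v) - 1))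
    (hwa : ∀ a : C, a ≠ u → a ≠ v → w a = -x a)
    (A : Finset C)
    (hA : ∀ S : Finset C, g A + ∑ a ∈ A, w a ≤ g S + ∑ a ∈ S, w a) :
    u ∈ A ∧ v ∉ A ∧
      ∀ S : Finset C, u ∈ S → v ∉ S →
        g A - ∑ a ∈ A, x a ≤ g S - ∑ a ∈ S, x a := by
  have weight_u_small : g {u} + w u < g ∅ := by linarith
  have weight_v_large : g (univ.erase v) < g univ + w v := by linarith
  exact exchange_capacity_via_single_minimization_general hsub (subset_univ A)
    weight_u_small weight_v_large hwa hA
end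

section
/- Let f : 2^V → ℝ be submodular with f(∅) = 0, let x ∈ B(f), and let S ⊆ V be such that x(S) = f(S), every v with x(v) < 0 belongs to S, and no v with x(v) > 0 belongs to S. Then S is a minimizer of f, i.e., f(S) ≤ f(T) for every T ⊆ V. -/
open Finset

theorem sum_le_sum_of_nonpos_of_nonneg {ι M : Type*} [AddCommMonoid M] [Preorder M]
    [AddLeftMono M] {f : ι → M} {s t : Finset ι}
    (hs : ∀ i ∈ s, i ∉ t → f i ≤ 0) (ht : ∀ i ∈ t, i ∉ s → 0 ≤ f i) :
    ∑ i ∈ s, f i ≤ ∑ i ∈ t, f i := by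
  classical
  calc
    ∑ i ∈ s, f i ≤ ∑ i ∈ s ∩ t, f i :=
      sum_le_sum_of_subset_of_nonpos' inter_subset_left fun i his hi ↦
        hs i his fun hit ↦ hi (mem_inter_of_mem his hit)
    _ ≤ ∑ i ∈ t, f i :=
      sum_le_sum_of_subset_of_nonneg inter_subset_right fun i hit hi ↦
        ht i hit fun his ↦ hi (mem_inter_of_mem his hit)

theorem tight_set_is_minimizer_general {V M : Type*} [AddCommMonoid M] [Preorder M]
    [AddLeftMono M] (f : Finset V → M) (x : V → M) (hle : ∀ T : Finset V, ∑ v ∈ T, x v ≤ f T)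
    (S : Finset V) (hSt : ∑ v ∈ S, x v = f S)
    (hnonpos : ∀ v ∈ S, x v ≤ 0) (hnonneg : ∀ v ∉ S, 0 ≤ x v) (T : Finset V) :
    f S ≤ f T :=
  calc
    f S = ∑ v ∈ S, x v := hSt.symm
    _ ≤ ∑ v ∈ T, x v :=
      sum_le_sum_of_nonpos_of_nonneg (fun v hv _ ↦ hnonpos v hv) fun v _ hv ↦ hnonneg v hv
    _ ≤ f T := hle T

/-- if `x ∈ B(f)`, `S` is tight for `x`, `S` contains all elements
with `x(v) < 0` and no element with `x(v) > 0`, then `S` minimizes `f`. -/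
theorem tight_set_is_minimizer
    {V : Type*} [Fintype V] [DecidableEq V]
    (f : Finset V → ℝ) (hsub : Submodular f) (h0 : f ∅ = 0)
    (x : V → ℝ) (hx : InBasePolytope f x)
    (S : Finset V) (hSt : ∑ v ∈ S, x v = f S)
    (hneg : ∀ v : V, x v < 0 → v ∈ S)
    (hpos : ∀ v : V, 0 < x v → v ∉ S) :
    ∀ T : Finset V, f S ≤ f T :=
  tight_set_is_minimizer_general f x hx.1 S hSt
    (fun v hv ↦ not_lt.1 fun h ↦ hpos v h hv) fun v hv ↦ not_lt.1 fun h ↦ hv (hneg v h)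
end
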